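/- Let (𝒜,𝒳) be a nontrivial (k,m)-net in ℙ²(ℂ) such that at least one class 𝒜_i is a pencil. Then k ≤ 4; moreover if k = 4 then m ≥ 4. -/

import Mathlib

/-- The complex projective plane ℙ²(ℂ) = ℙ(ℂ³). -/
abbrev P2 : Type := Projectivization ℂ (Fin 3 → ℂ)

/-- A line in ℙ²(ℂ): the set of points annihilated by a nonzero linear form on ℂ³. -/
def IsProjLine (L : Set P2) : Prop :=
  ∃ f : (Fin 3 → ℂ) →ₗ[ℂ] ℂ, f ≠ 0 ∧ L = {p : P2 | f p.rep = 0}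

/-- A (k,m)-net in ℙ²(ℂ): a family of `k` pairwise disjoint classes of lines, each of
cardinality `m`, and a finite set `X` of points such that lines of distinct classes meet
in a point of `X` and through every point of `X` passes exactly one line of each class. -/
structure IsNet (k m : ℕ) (A : Fin k → Finset (Set P2)) (X : Set P2) : Prop where
  lines : ∀ i, ∀ L ∈ A i, IsProjLine L
  card_eq : ∀ i, (A i).card = m
  finiteX : X.Finite
  disj : ∀ i j, i ≠ j → Disjoint (A i) (A j)
  meets : ∀ i j, i ≠ j → ∀ L ∈ A i, ∀ L' ∈ A j, ∃ p ∈ X, p ∈ L ∧ p ∈ L'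
  unique_through : ∀ p ∈ X, ∀ i, ∃! L, L ∈ A i ∧ p ∈ L


/-- A class of lines is a pencil if all of its lines pass through a common point. -/
def IsPencil (S : Finset (Set P2)) : Prop :=
  ∃ p : P2, ∀ L ∈ S, p ∈ L

/-!
Let `P` be the centre of the pencil class. Scale the linear forms of the lines avoiding `P` to be
`1` at `P`. The difference `f_L - f_L'` of two such forms vanishes both at `P` and on `L ∩ L'`; if
`L` and `L'` belong to different classes it is therefore a multiple of the form `g_M` of the pencil
line `M` through `L ∩ L'`.

Fix a pencil line `M₀` and a point `Q ≠ P` on it. Take `L₀` in a class `𝒜_j` and a line `L` of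
another class meeting `L₀` on `M₀`, so that `f_L(Q) = f_{L₀}(Q)`. Then
`∑_{L' ∈ 𝒜_j, L' ≠ L₀} (f_L - f_L') / (f_{L₀}(Q) - f_L'(Q)) = ∑_{M ≠ M₀} g_M / g_M(Q)`,
as `M` is determined by `L'` and conversely. The right-hand side does not depend on `L`. If there
are two further classes, then subtracting the identities for their lines `L₁ ≠ L₂` through
`L₀ ∩ M₀` leaves `∑_{L' ≠ L₀} 1 / (f_{L₀}(Q) - f_L'(Q)) = 0` for every `L₀ ∈ 𝒜_j`: the `m` distinct
scalars `f_L(Q)`, `L ∈ 𝒜_j`, are in electrostatic equilibrium. Multiplying by `f_{L₀}(Q)` and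
summing over `L₀` gives `m (m - 1) / 2 = 0`, which is absurd.
-/

open Module
open scoped LinearAlgebra.Projectivization

section Equilibrium

variable {K ι : Type*} [Field K] [DecidableEq ι]

theorem sum_mul_sum_erase_inv_sub {s : Finset ι} {x : ι → K} (hx : Set.InjOn x s) :
    ∑ i ∈ s, x i * ∑ j ∈ s.erase i, (x i - x j)⁻¹ = (s.card.choose 2 : K) := by
  induction s using Finset.induction_on with
  | empty => simp
  | insert a s ha ih =>
    have hne : ∀ i ∈ s, x a - x i ≠ 0 := fun i hi h ↦
      ha (hx (by simp) (by simp [hi]) (sub_eq_zero.1 h) ▸ hi)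
    have split_erase : ∀ i ∈ s, x i * ∑ j ∈ (insert a s).erase i, (x i - x j)⁻¹ =
        x i * (x i - x a)⁻¹ + x i * ∑ j ∈ s.erase i, (x i - x j)⁻¹ := fun i hi ↦ by
      rw [Finset.erase_insert_of_ne (ne_of_mem_of_not_mem hi ha).symm,
        Finset.sum_insert (fun h ↦ ha (Finset.mem_of_mem_erase h)), mul_add]
    have pair_eq_one : ∀ i ∈ s, x a * (x a - x i)⁻¹ + x i * (x i - x a)⁻¹ = 1 := fun i hi ↦ by
      rw [← neg_sub (x a) (x i), inv_neg, mul_neg, ← sub_eq_add_neg, ← sub_mul,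
        mul_inv_cancel₀ (hne i hi)]
    rw [Finset.sum_insert ha, Finset.erase_insert ha, Finset.sum_congr rfl split_erase,
      Finset.sum_add_distrib, ih (hx.mono (by simp)), ← add_assoc, Finset.mul_sum,
      ← Finset.sum_add_distrib, Finset.sum_congr rfl pair_eq_one,
      Finset.card_insert_of_notMem ha, Nat.choose_succ_succ' s.card 1]
    simp

end Equilibrium

section Hyperplanes

variable {K V : Type*} [Field K] [AddCommGroup V] [Module K V]

/-- A hyperplane of a projective space: the zero locus of a nonzero linear form. For `V` of
dimension `3` these are the lines of the projective plane. -/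
def IsProjHyperplane (H : Set (ℙ K V)) : Prop :=
  ∃ f : Dual K V, f ≠ 0 ∧ H = {p | f p.rep = 0}

theorem IsProjHyperplane.exists_normalized_form {H : Set (ℙ K V)} (hH : IsProjHyperplane H)
    (P : ℙ K V) :
    ∃ f : Dual K V, f ≠ 0 ∧ (∀ p, p ∈ H ↔ f p.rep = 0) ∧ (P ∉ H → f P.rep = 1) := by
  obtain ⟨f, hf, rfl⟩ := hH
  by_cases hP : f P.rep = 0
  · exact ⟨f, hf, fun p ↦ Iff.rfl, fun h ↦ absurd hP h⟩
  · exact ⟨(f P.rep)⁻¹ • f, by simp [hf, hP], fun p ↦ by simp [hP], fun _ ↦ by simp [hP]⟩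

open scoped Classical in
/-- A linear form cutting out the hyperplane `H`, scaled to take the value `1` at the chosen
representative of `P` when `P ∉ H`. The value is `0` when `H` is not a hyperplane. -/
noncomputable def normalizedForm (P : ℙ K V) (H : Set (ℙ K V)) : Dual K V :=
  if hH : IsProjHyperplane H then (hH.exists_normalized_form P).choose else 0

theorem exists_eq_smul_of_apply_rep_eq_zero (hV : finrank K V = 3) {P Q : ℙ K V} (hPQ : P ≠ Q)
    {f g : Dual K V} (hg : g ≠ 0) (hfP : f P.rep = 0) (hfQ : f Q.rep = 0) (hgP : g P.rep = 0)
    (hgQ : g Q.rep = 0) : ∃ c : K, f = c • g := by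
  have : FiniteDimensional K V := .of_finrank_pos (by omega)
  have hindep : LinearIndependent K (Projectivization.rep ∘ ![P, Q]) :=
    Projectivization.independent_iff.1 ((Projectivization.independent_pair_iff_ne P Q).2 hPQ)
  have span_le_ker {h : Dual K V} (hP : h P.rep = 0) (hQ : h Q.rep = 0) :
      Submodule.span K (Set.range (Projectivization.rep ∘ ![P, Q])) ≤ LinearMap.ker h := by
    rw [Submodule.span_le, Set.range_subset_iff, Fin.forall_fin_two]
    exact ⟨hP, hQ⟩
  have span_eq_ker := Submodule.eq_of_le_of_finrank_eq (span_le_ker hgP hgQ) (by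
    have := Dual.finrank_ker_add_one_of_ne_zero hg
    rw [finrank_span_eq_card hindep, Fintype.card_fin]
    omega)
  have ker_le : ⨅ _ : Unit, LinearMap.ker g ≤ LinearMap.ker f := by
    rw [iInf_const, ← span_eq_ker]
    exact span_le_ker hfP hfQ
  have hf := mem_span_of_iInf_ker_le_ker ker_le
  rw [Set.range_const, Submodule.mem_span_singleton] at hf
  exact hf.imp fun _ ↦ Eq.symm

namespace IsProjHyperplane

variable {P Q : ℙ K V} {L L' M : Set (ℙ K V)}

theorem normalizedForm_spec (hL : IsProjHyperplane L) (P : ℙ K V) :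
    normalizedForm P L ≠ 0 ∧ (∀ p, p ∈ L ↔ normalizedForm P L p.rep = 0) ∧
      (P ∉ L → normalizedForm P L P.rep = 1) := by
  rw [normalizedForm, dif_pos hL]
  exact (hL.exists_normalized_form P).choose_spec

theorem normalizedForm_ne_zero (hL : IsProjHyperplane L) (P : ℙ K V) : normalizedForm P L ≠ 0 :=
  (hL.normalizedForm_spec P).1

theorem mem_iff_normalizedForm_eq_zero (hL : IsProjHyperplane L) (P : ℙ K V) {p : ℙ K V} :
    p ∈ L ↔ normalizedForm P L p.rep = 0 :=
  (hL.normalizedForm_spec P).2.1 p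

theorem normalizedForm_apply_self (hL : IsProjHyperplane L) (hP : P ∉ L) :
    normalizedForm P L P.rep = 1 :=
  (hL.normalizedForm_spec P).2.2 hP

theorem eq_of_normalizedForm_eq_smul (hL : IsProjHyperplane L) (hL' : IsProjHyperplane L') {c : K}
    (h : normalizedForm P L = c • normalizedForm P L') : L = L' := by
  have hc : c ≠ 0 := by
    rintro rfl
    exact hL.normalizedForm_ne_zero P (by rw [h, zero_smul])
  ext p
  simp [hL.mem_iff_normalizedForm_eq_zero P, hL'.mem_iff_normalizedForm_eq_zero P, h, hc]

theorem eq_of_mem_of_mem (hV : finrank K V = 3) (hL : IsProjHyperplane L)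
    (hL' : IsProjHyperplane L') (hPQ : P ≠ Q) (hP : P ∈ L) (hQ : Q ∈ L) (hP' : P ∈ L')
    (hQ' : Q ∈ L') : L = L' := by
  rw [hL.mem_iff_normalizedForm_eq_zero P] at hP hQ
  rw [hL'.mem_iff_normalizedForm_eq_zero P] at hP' hQ'
  obtain ⟨c, hc⟩ := exists_eq_smul_of_apply_rep_eq_zero hV hPQ (hL'.normalizedForm_ne_zero P)
    hP hQ hP' hQ'
  exact hL.eq_of_normalizedForm_eq_smul hL' hc

theorem exists_normalizedForm_sub_eq_smul (hV : finrank K V = 3) (hL : IsProjHyperplane L)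
    (hL' : IsProjHyperplane L') (hM : IsProjHyperplane M) (hPL : P ∉ L) (hPL' : P ∉ L')
    (hPM : P ∈ M) (hQM : Q ∈ M) (hPQ : P ≠ Q)
    (hQ : normalizedForm P L Q.rep = normalizedForm P L' Q.rep) :
    ∃ c : K, normalizedForm P L - normalizedForm P L' = c • normalizedForm P M := by
  refine exists_eq_smul_of_apply_rep_eq_zero hV hPQ (hM.normalizedForm_ne_zero P) ?_ ?_
    ((hM.mem_iff_normalizedForm_eq_zero P).1 hPM) ((hM.mem_iff_normalizedForm_eq_zero P).1 hQM)
  · rw [LinearMap.sub_apply, hL.normalizedForm_apply_self hPL,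
      hL'.normalizedForm_apply_self hPL', sub_self]
  · rw [LinearMap.sub_apply, hQ, sub_self]

/-- For `Q ∈ M` both inverses are `0⁻¹ = 0`. -/
theorem inv_smul_normalizedForm_sub_eq (hV : finrank K V = 3) (hL : IsProjHyperplane L)
    (hL' : IsProjHyperplane L') (hM : IsProjHyperplane M) (hne : L ≠ L') (hPL : P ∉ L)
    (hPL' : P ∉ L') (hPM : P ∈ M) {p : ℙ K V} (hPp : P ≠ p) (hpL : p ∈ L) (hpL' : p ∈ L')
    (hpM : p ∈ M) :
    (normalizedForm P L Q.rep - normalizedForm P L' Q.rep)⁻¹ •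
        (normalizedForm P L - normalizedForm P L') =
      (normalizedForm P M Q.rep)⁻¹ • normalizedForm P M := by
  obtain ⟨c, hc⟩ := exists_normalizedForm_sub_eq_smul hV hL hL' hM hPL hPL' hPM hpM hPp
    (((hL.mem_iff_normalizedForm_eq_zero P).1 hpL).trans
      ((hL'.mem_iff_normalizedForm_eq_zero P).1 hpL').symm)
  have hc0 : c ≠ 0 := by
    rintro rfl
    refine hne (hL.eq_of_normalizedForm_eq_smul (P := P) (c := 1) hL' ?_)
    rwa [one_smul, ← sub_eq_zero, ← zero_smul K (normalizedForm P M)]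
  rw [← LinearMap.sub_apply, hc, LinearMap.smul_apply, smul_eq_mul, mul_inv, smul_smul,
    mul_right_comm, inv_mul_cancel₀ hc0, one_mul]

end IsProjHyperplane

end Hyperplanes

/-- A net of hyperplanes, with classes indexed by `ι`, each of cardinality `m`: the analogue of
`IsNet` over an arbitrary field, for any index type and any set `X` of points. -/
structure IsHyperplaneNet {K V ι : Type*} [Field K] [AddCommGroup V] [Module K V] (m : ℕ)
    (A : ι → Finset (Set (ℙ K V))) (X : Set (ℙ K V)) : Prop where
  isProjHyperplane : ∀ i, ∀ L ∈ A i, IsProjHyperplane L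
  card_eq : ∀ i, (A i).card = m
  disjoint : ∀ i j, i ≠ j → Disjoint (A i) (A j)
  meets : ∀ i j, i ≠ j → ∀ L ∈ A i, ∀ L' ∈ A j, ∃ p ∈ X, p ∈ L ∧ p ∈ L'
  existsUnique_mem : ∀ p ∈ X, ∀ i, ∃! L, L ∈ A i ∧ p ∈ L

theorem IsNet.isHyperplaneNet {k m : ℕ} {A : Fin k → Finset (Set P2)} {X : Set P2}
    (hN : IsNet k m A X) : IsHyperplaneNet m A X :=
  ⟨hN.lines, hN.card_eq, hN.disj, hN.meets, hN.unique_through⟩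

namespace IsHyperplaneNet

variable {K V ι : Type*} [Field K] [AddCommGroup V] [Module K V] {m : ℕ}
  {A : ι → Finset (Set (ℙ K V))} {X : Set (ℙ K V)} {i j l l₁ l₂ : ι} {P Q : ℙ K V}
  {L L₀ L' M M₀ N N' : Set (ℙ K V)}

theorem ne_of_mem (hN : IsHyperplaneNet m A X) (hij : i ≠ j) (hL : L ∈ A i) (hL' : L' ∈ A j) :
    L ≠ L' :=
  fun h ↦ Finset.disjoint_left.1 (hN.disjoint i j hij) hL (h ▸ hL')

theorem eq_of_concurrent (hN : IsHyperplaneNet m A X) (hV : finrank K V = 3) (hij : i ≠ j)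
    (hL : L ∈ A i) (hM : M ∈ A j) (hNl : N ∈ A l) (hNl' : N' ∈ A l) {p p' : ℙ K V} (hpX : p ∈ X)
    (hpL : p ∈ L) (hpM : p ∈ M) (hpN : p ∈ N) (hpL' : p' ∈ L) (hpM' : p' ∈ M) (hpN' : p' ∈ N') :
    N = N' := by
  obtain rfl : p = p' := by
    by_contra hne
    exact hN.ne_of_mem hij hL hM ((hN.isProjHyperplane i L hL).eq_of_mem_of_mem hV
      (hN.isProjHyperplane j M hM) hne hpL hpL' hpM hpM')
  exact (hN.existsUnique_mem p hpX l).unique ⟨hNl, hpN⟩ ⟨hNl', hpN'⟩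

section Pencil

variable (hN : IsHyperplaneNet m A X) (hP : ∀ M ∈ A i, P ∈ M) (hm : 1 < m)
include hN hP hm

theorem center_notMem : P ∉ X := fun hPX ↦ by
  obtain ⟨M, hM, M', hM', hne⟩ := Finset.one_lt_card.1 (hN.card_eq i ▸ hm)
  exact hne ((hN.existsUnique_mem P hPX i).unique ⟨hM, hP M hM⟩ ⟨hM', hP M' hM'⟩)

theorem center_ne {p : ℙ K V} (hp : p ∈ X) : P ≠ p :=
  fun h ↦ hN.center_notMem hP hm (h ▸ hp)

theorem center_notMem_of_mem (hV : finrank K V = 3) (hji : j ≠ i) (hL : L ∈ A j) : P ∉ L := by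
  intro hPL
  obtain ⟨M, hM⟩ : (A i).Nonempty := Finset.card_pos.1 (by rw [hN.card_eq]; omega)
  obtain ⟨p, hpX, hpL, hpM⟩ := hN.meets j i hji L hL M hM
  exact hN.ne_of_mem hji hL hM ((hN.isProjHyperplane j L hL).eq_of_mem_of_mem hV
    (hN.isProjHyperplane i M hM) (hN.center_ne hP hm hpX) hPL hpL (hP M hM) hpM)

theorem normalizedForm_apply_eq_iff (hV : finrank K V = 3) (hji : j ≠ i) (hli : l ≠ i)
    (hL : L ∈ A j) (hL' : L' ∈ A l) (hM : M ∈ A i) (hQM : Q ∈ M) (hPQ : P ≠ Q) {p : ℙ K V}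
    (hpX : p ∈ X) (hpL : p ∈ L) (hpM : p ∈ M) :
    normalizedForm P L Q.rep = normalizedForm P L' Q.rep ↔ p ∈ L' := by
  have hLH := hN.isProjHyperplane j L hL
  have hLH' := hN.isProjHyperplane l L' hL'
  have hMH := hN.isProjHyperplane i M hM
  have hPL := hN.center_notMem_of_mem hP hm hV hji hL
  have hPL' := hN.center_notMem_of_mem hP hm hV hli hL'
  have hLp := (hLH.mem_iff_normalizedForm_eq_zero P).1 hpL
  constructor <;> intro h
  · obtain ⟨c, hc⟩ := hLH.exists_normalizedForm_sub_eq_smul hV hLH' hMH hPL hPL' (hP M hM) hQM hPQ h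
    have hc_p := LinearMap.congr_fun hc p.rep
    rw [hLH'.mem_iff_normalizedForm_eq_zero P]
    simpa [hLp, (hMH.mem_iff_normalizedForm_eq_zero P).1 hpM] using hc_p
  · obtain ⟨c, hc⟩ := hLH.exists_normalizedForm_sub_eq_smul hV hLH' hMH hPL hPL' (hP M hM) hpM
      (hN.center_ne hP hm hpX) (hLp.trans ((hLH'.mem_iff_normalizedForm_eq_zero P).1 h).symm)
    have hc_Q := LinearMap.congr_fun hc Q.rep
    simpa [(hMH.mem_iff_normalizedForm_eq_zero P).1 hQM, sub_eq_zero] using hc_Q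

theorem injOn_normalizedForm_apply (hV : finrank K V = 3) (hji : j ≠ i) (hM : M ∈ A i)
    (hQM : Q ∈ M) (hPQ : P ≠ Q) : Set.InjOn (fun L ↦ normalizedForm P L Q.rep) (A j) := by
  intro L hL L' hL' h
  obtain ⟨p, hpX, hpL, hpM⟩ := hN.meets j i hji L hL M hM
  have hpL' := (hN.normalizedForm_apply_eq_iff hP hm hV hji hji hL hL' hM hQM hPQ hpX hpL hpM).1 h
  exact (hN.existsUnique_mem p hpX j).unique ⟨hL, hpL⟩ ⟨hL', hpL'⟩

open scoped Classical in
theorem sum_erase_inv_smul_normalizedForm_sub (hV : finrank K V = 3) (hji : j ≠ i) (hli : l ≠ i)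
    (hlj : l ≠ j) (hL₀ : L₀ ∈ A j) (hL : L ∈ A l) (hM₀ : M₀ ∈ A i) (hQM₀ : Q ∈ M₀) (hPQ : P ≠ Q)
    {p : ℙ K V} (hpX : p ∈ X) (hpL₀ : p ∈ L₀) (hpL : p ∈ L) (hpM₀ : p ∈ M₀) :
    ∑ L' ∈ (A j).erase L₀, (normalizedForm P L₀ Q.rep - normalizedForm P L' Q.rep)⁻¹ •
        (normalizedForm P L - normalizedForm P L') =
      ∑ M ∈ (A i).erase M₀, (normalizedForm P M Q.rep)⁻¹ • normalizedForm P M := by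
  have pencil_line_through : ∀ L' ∈ A j, ∃ M ∈ A i, ∃ q ∈ X, q ∈ L ∧ q ∈ L' ∧ q ∈ M := by
    intro L' hL'
    obtain ⟨q, hqX, hqL, hqL'⟩ := hN.meets l j hlj L hL L' hL'
    obtain ⟨M, ⟨hM, hqM⟩, -⟩ := hN.existsUnique_mem q hqX i
    exact ⟨M, hM, q, hqX, hqL, hqL', hqM⟩
  choose r hr q hqX hqL hqL' hqr using pencil_line_through
  have r_eq {L' M : Set (ℙ K V)} (hL' : L' ∈ A j) (hM : M ∈ A i) {p' : ℙ K V} (hL'p : p' ∈ L')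
      (hLp : p' ∈ L) (hMp : p' ∈ M) : r L' hL' = M :=
    hN.eq_of_concurrent hV hlj hL hL' (hr L' hL') hM (hqX L' hL') (hqL L' hL') (hqL' L' hL')
      (hqr L' hL') hLp hL'p hMp
  have eq_of_r {L' L'' : Set (ℙ K V)} (hL' : L' ∈ A j) (hL'' : L'' ∈ A j) {p' : ℙ K V}
      (hL''p : p' ∈ L'') (hLp : p' ∈ L) (hrp : p' ∈ r L' hL') : L' = L'' :=
    hN.eq_of_concurrent hV hli hL (hr L' hL') hL' hL'' (hqX L' hL') (hqL L' hL') (hqr L' hL')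
      (hqL' L' hL') hLp hrp hL''p
  refine Finset.sum_bij (fun L' hL' ↦ r L' (Finset.mem_of_mem_erase hL')) ?_ ?_ ?_ ?_
  · intro L' hL'
    obtain ⟨hne, hL'⟩ := Finset.mem_erase.1 hL'
    exact Finset.mem_erase.2 ⟨fun h ↦ hne (eq_of_r hL' hL₀ hpL₀ hpL (h ▸ hpM₀)), hr L' hL'⟩
  · intro L' hL' L'' hL'' h
    have hL' := Finset.mem_of_mem_erase hL'
    have hL'' := Finset.mem_of_mem_erase hL''
    exact eq_of_r hL' hL'' (hqL' L'' hL'') (hqL L'' hL'') (h ▸ hqr L'' hL'')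
  · intro M hM
    obtain ⟨hne, hM⟩ := Finset.mem_erase.1 hM
    obtain ⟨p', hpX', hpL', hpM'⟩ := hN.meets l i hli L hL M hM
    obtain ⟨L', ⟨hL', hL'p⟩, -⟩ := hN.existsUnique_mem p' hpX' j
    have hrM := r_eq hL' hM hL'p hpL' hpM'
    refine ⟨L', Finset.mem_erase.2 ⟨?_, hL'⟩, hrM⟩
    rintro rfl
    exact hne (hrM.symm.trans (r_eq hL' hM₀ hpL₀ hpL hpM₀))
  · intro L' hL'
    have hL' := Finset.mem_of_mem_erase hL'
    rw [(hN.normalizedForm_apply_eq_iff hP hm hV hji hli hL₀ hL hM₀ hQM₀ hPQ hpX hpL₀ hpM₀).2 hpL]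
    exact (hN.isProjHyperplane l L hL).inv_smul_normalizedForm_sub_eq hV
      (hN.isProjHyperplane j L' hL') (hN.isProjHyperplane i _ (hr L' hL'))
      (hN.ne_of_mem hlj hL hL') (hN.center_notMem_of_mem hP hm hV hli hL)
      (hN.center_notMem_of_mem hP hm hV hji hL') (hP _ (hr L' hL'))
      (hN.center_ne hP hm (hqX L' hL')) (hqL L' hL') (hqL' L' hL') (hqr L' hL')

open scoped Classical in
theorem sum_erase_inv_normalizedForm_sub_eq_zero (hV : finrank K V = 3) (hji : j ≠ i)
    (hl₁i : l₁ ≠ i) (hl₂i : l₂ ≠ i) (hl₁j : l₁ ≠ j) (hl₂j : l₂ ≠ j) (hl : l₁ ≠ l₂) (hL₀ : L₀ ∈ A j)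
    (hM₀ : M₀ ∈ A i) (hQM₀ : Q ∈ M₀) (hPQ : P ≠ Q) :
    ∑ L' ∈ (A j).erase L₀, (normalizedForm P L₀ Q.rep - normalizedForm P L' Q.rep)⁻¹ = 0 := by
  obtain ⟨p, hpX, hpL₀, hpM₀⟩ := hN.meets j i hji L₀ hL₀ M₀ hM₀
  obtain ⟨L₁, ⟨hL₁, hpL₁⟩, -⟩ := hN.existsUnique_mem p hpX l₁
  obtain ⟨L₂, ⟨hL₂, hpL₂⟩, -⟩ := hN.existsUnique_mem p hpX l₂
  have sum_eq₁ := hN.sum_erase_inv_smul_normalizedForm_sub hP hm hV hji hl₁i hl₁j hL₀ hL₁ hM₀ hQM₀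
    hPQ hpX hpL₀ hpL₁ hpM₀
  have sum_eq₂ := hN.sum_erase_inv_smul_normalizedForm_sub hP hm hV hji hl₂i hl₂j hL₀ hL₂ hM₀ hQM₀
    hPQ hpX hpL₀ hpL₂ hpM₀
  have hsum : (∑ L' ∈ (A j).erase L₀, (normalizedForm P L₀ Q.rep - normalizedForm P L' Q.rep)⁻¹) •
      (normalizedForm P L₁ - normalizedForm P L₂) = 0 := by
    rw [← sub_eq_zero.2 (sum_eq₁.trans sum_eq₂.symm), ← Finset.sum_sub_distrib, Finset.sum_smul]
    exact Finset.sum_congr rfl fun L' _ ↦ by module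
  refine (smul_eq_zero.1 hsum).resolve_right fun h ↦ hN.ne_of_mem hl hL₁ hL₂ ?_
  exact (hN.isProjHyperplane l₁ L₁ hL₁).eq_of_normalizedForm_eq_smul (c := 1)
    (hN.isProjHyperplane l₂ L₂ hL₂) (by rw [one_smul, sub_eq_zero.1 h])

end Pencil

theorem choose_two_cast_eq_zero (hN : IsHyperplaneNet m A X) (hP : ∀ M ∈ A i, P ∈ M)
    (hV : finrank K V = 3) (hji : j ≠ i) (hl₁i : l₁ ≠ i) (hl₂i : l₂ ≠ i) (hl₁j : l₁ ≠ j)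
    (hl₂j : l₂ ≠ j) (hl : l₁ ≠ l₂) : (m.choose 2 : K) = 0 := by
  classical
  rcases lt_or_ge 1 m with hm | hm
  · obtain ⟨M₀, hM₀⟩ : (A i).Nonempty := Finset.card_pos.1 (by rw [hN.card_eq]; omega)
    obtain ⟨L, hL⟩ : (A j).Nonempty := Finset.card_pos.1 (by rw [hN.card_eq]; omega)
    obtain ⟨Q, hQX, -, hQM₀⟩ := hN.meets j i hji L hL M₀ hM₀
    have hPQ := hN.center_ne hP hm hQX
    rw [← hN.card_eq j, ← sum_mul_sum_erase_inv_sub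
      (hN.injOn_normalizedForm_apply hP hm hV hji hM₀ hQM₀ hPQ)]
    refine Finset.sum_eq_zero fun L₀ hL₀ ↦ ?_
    rw [hN.sum_erase_inv_normalizedForm_sub_eq_zero hP hm hV hji hl₁i hl₂i hl₁j hl₂j hl hL₀ hM₀
      hQM₀ hPQ, mul_zero]
  · rw [Nat.choose_eq_zero_of_lt (by omega), Nat.cast_zero]

end IsHyperplaneNet

theorem net_with_pencil_k_le_four_general {K V ι : Type*} [Field K] [AddCommGroup V] [Module K V]
    [Fintype ι] {m : ℕ} {A : ι → Finset (Set (ℙ K V))} {X : Set (ℙ K V)}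
    (hV : finrank K V = 3) (hm : (m.choose 2 : K) ≠ 0) (hN : IsHyperplaneNet m A X)
    (hpen : ∃ i, ∃ P, ∀ L ∈ A i, P ∈ L) : Fintype.card ι ≤ 3 := by
  classical
  obtain ⟨i, P, hP⟩ := hpen
  by_contra! hcard
  obtain ⟨j, hj, l₁, hl₁, l₂, hl₂, hjl₁, hjl₂, hl⟩ : ∃ j ∈ Finset.univ.erase i,
      ∃ l₁ ∈ Finset.univ.erase i, ∃ l₂ ∈ Finset.univ.erase i, j ≠ l₁ ∧ j ≠ l₂ ∧ l₁ ≠ l₂ :=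
    Finset.two_lt_card.1 (by
      rw [Finset.card_erase_of_mem (Finset.mem_univ i), Finset.card_univ]
      omega)
  exact hm (hN.choose_two_cast_eq_zero hP hV (Finset.ne_of_mem_erase hj)
    (Finset.ne_of_mem_erase hl₁) (Finset.ne_of_mem_erase hl₂) hjl₁.symm hjl₂.symm hl)

/-- For a nontrivial (k,m)-net in ℙ²(ℂ) with at least one class a pencil,
one has k ≤ 4; moreover if k = 4 then m ≥ 4. -/
theorem net_with_pencil_k_le_four (k m : ℕ) (A : Fin k → Finset (Set P2)) (X : Set P2)
    (hk : 3 ≤ k) (hm : 1 < m) (hN : IsNet k m A X)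
    (hpen : ∃ i : Fin k, IsPencil (A i)) :
    k ≤ 4 ∧ (k = 4 → 4 ≤ m) := by
  have hchoose : (m.choose 2 : ℂ) ≠ 0 := Nat.cast_ne_zero.2 (Nat.choose_pos hm).ne'
  have hk3 := net_with_pencil_k_le_four_general (by simp) hchoose hN.isHyperplaneNet hpen
  rw [Fintype.card_fin] at hk3
  exact ⟨by omega, fun hk4 ↦ by omega⟩
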